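/- The sum over all nontrivial zeros ρ of ζ, counted with multiplicity, of Re(1/ρ) converges absolutely and equals 1 + γ/2 − log(2√π), where γ is the Euler–Mascheroni constant; that is, Σ_ρ m_ρ·Re(1/ρ) = 1 + γ/2 − log(2√π). -/

import Mathlib

/-!
Let `ξ(s) = s (s - 1) π^(-s/2) Γ(s/2) ζ(s) / 2`. The Mellin representation of the completed zeta
function, whose theta kernel decays exponentially, gives `log |ξ(s)| ≤ O(|s| log |s|) = o(|s|²)`.
Divide `ξ` by the polynomial of its zeros in `|s| ≤ R`. By the maximum principle on `|s| = 2R` the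
quotient is at most `exp (o(R²))` times its value at `0`, and Borel–Carathéodory together with
Cauchy's estimate shows that its logarithmic derivative varies by `o(1)` on bounded sets. Hence
`ξ'/ξ(1) - ξ'/ξ(0) = lim_{R → ∞} ∑_{|ρ| ≤ R} m_ρ (1 / (1 - ρ) + 1 / ρ)`, without any estimate on the
number of zeros.

The real parts of the terms are nonnegative, so their sum converges absolutely, and the symmetry
`ρ ↦ 1 - ρ` makes it twice the sum of `m_ρ Re (1 / ρ)`. The same symmetry gives
`ξ'/ξ(1) = -ξ'/ξ(0)`, and `ξ'/ξ(1)` is the value of `completedRiemannZeta₀` at `1`.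
-/

open Complex Real

/-- The set of nontrivial zeros of the Riemann zeta function. -/
def nontrivialZetaZeros : Set ℂ :=
  {ρ : ℂ | riemannZeta ρ = 0 ∧ 0 < ρ.re ∧ ρ.re < 1}

/-- The order of vanishing of `ζ` at `ρ`: the least `m` such that the `m`-th derivative of
`ζ` does not vanish at `ρ`. -/
noncomputable def zetaZeroOrder (ρ : ℂ) : ℕ :=
  sInf {m : ℕ | iteratedDeriv m riemannZeta ρ ≠ 0}

open Set Metric Filter Topology Asymptotics MeasureTheory

section Factorization

variable {𝕜 : Type*} [NontriviallyNormedField 𝕜] {f p : 𝕜 → 𝕜} {U : Set 𝕜}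

lemma exists_eventuallyEq_mul_of_analyticOrderAt_le (hf : AnalyticOnNhd 𝕜 f U)
    (hp : AnalyticOnNhd 𝕜 p U) (hp_top : ∀ z ∈ U, analyticOrderAt p z ≠ ⊤)
    (hle : ∀ z ∈ U, analyticOrderAt p z ≤ analyticOrderAt f z) :
    ∃ g, AnalyticOnNhd 𝕜 g U ∧ ∀ z ∈ U, f =ᶠ[𝓝 z] p * g := by
  have hq : MeromorphicOn (f * p⁻¹) U := hf.meromorphicOn.mul hp.meromorphicOn.inv
  set g := toMeromorphicNFOn (f * p⁻¹) U
  have hg : AnalyticOnNhd 𝕜 g U := fun z hz ↦ by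
    rw [← (meromorphicNFOn_toMeromorphicNFOn _ _ hz).meromorphicOrderAt_nonneg_iff_analyticAt,
      meromorphicOrderAt_toMeromorphicNFOn hq hz,
      meromorphicOrderAt_mul (hf z hz).meromorphicAt (hp z hz).meromorphicAt.inv,
      meromorphicOrderAt_inv, (hf z hz).meromorphicOrderAt_eq, (hp z hz).meromorphicOrderAt_eq]
    have hle_z := hle z hz
    lift analyticOrderAt p z to ℕ using hp_top z hz with n
    cases hf_ord : analyticOrderAt f z with
    | top => exact le_top
    | coe k =>
      rw [hf_ord, Nat.cast_le] at hle_z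
      have hsub : (0 : ℤ) ≤ k + -n := by omega
      exact WithTop.coe_le_coe.2 hsub
  refine ⟨g, hg, fun z hz ↦ ?_⟩
  have hpunct : f =ᶠ[𝓝[≠] z] p * g := by
    filter_upwards [hq.toMeromorphicNFOn_eq_self_on_nhdsNE hz,
      (hp z hz).eventually_eq_zero_or_eventually_ne_zero.resolve_left
        (mt analyticOrderAt_eq_top.2 (hp_top z hz))] with w hw hpw
    simp only [Pi.mul_apply, Pi.inv_apply, g, hw]
    field_simp
  exact ((hf z hz).frequently_eq_iff_eventually_eq ((hp z hz).mul (hg z hz))).1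
    hpunct.frequently

lemma analyticOrderAt_prod_sub_pow [DecidableEq 𝕜] (S : Finset 𝕜) (m : 𝕜 → ℕ) (z : 𝕜) :
    analyticOrderAt (fun w ↦ ∏ a ∈ S, (w - a) ^ m a) z = if z ∈ S then (m z : ℕ∞) else 0 := by
  induction S using Finset.induction_on with
  | empty => simp [analyticAt_const.analyticOrderAt_eq_zero]
  | insert b S hb ih =>
    have hpow : AnalyticAt 𝕜 ((fun w ↦ w - b) ^ m b) z := by fun_prop
    have hprod : (fun w ↦ ∏ a ∈ insert b S, (w - a) ^ m a) =
        ((fun w ↦ w - b) ^ m b) * fun w ↦ ∏ a ∈ S, (w - a) ^ m a := by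
      ext w
      simp [Finset.prod_insert hb]
    rw [hprod, analyticOrderAt_mul hpow (by fun_prop), ih, analyticOrderAt_pow (by fun_prop)]
    obtain rfl | hzb := eq_or_ne z b
    · simp [hb]
    · simp [hzb]

lemma exists_eqOn_prod_sub_pow_mul (hf : AnalyticOnNhd 𝕜 f U) (S : Finset 𝕜)
    (hS : ∀ a ∈ S, analyticOrderAt f a ≠ ⊤) :
    ∃ g, AnalyticOnNhd 𝕜 g U ∧
      EqOn f ((fun z ↦ ∏ a ∈ S, (z - a) ^ analyticOrderNatAt f a) * g) U ∧
      ∀ a ∈ S, a ∈ U → g a ≠ 0 := by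
  classical
  set p : 𝕜 → 𝕜 := fun z ↦ ∏ a ∈ S, (z - a) ^ analyticOrderNatAt f a
  have hp : AnalyticOnNhd 𝕜 p U := fun z _ ↦ by fun_prop
  have hord (z : 𝕜) : analyticOrderAt p z = if z ∈ S then analyticOrderAt f z else 0 := by
    rw [analyticOrderAt_prod_sub_pow]
    split_ifs with hz
    exacts [Nat.cast_analyticOrderNatAt (hS z hz), rfl]
  have hp_top (z : 𝕜) : analyticOrderAt p z ≠ ⊤ := by
    rw [hord]
    split_ifs with hz
    exacts [hS z hz, ENat.zero_ne_top]
  have hp_le (z : 𝕜) : analyticOrderAt p z ≤ analyticOrderAt f z := by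
    rw [hord]
    split_ifs
    exacts [le_rfl, zero_le]
  obtain ⟨g, hg, hfg⟩ :=
    exists_eventuallyEq_mul_of_analyticOrderAt_le hf hp (fun z _ ↦ hp_top z) (fun z _ ↦ hp_le z)
  refine ⟨g, hg, fun z hz ↦ (hfg z hz).self_of_nhds, fun a haS haU ↦ ?_⟩
  have hadd : analyticOrderAt p a + analyticOrderAt g a = analyticOrderAt p a + 0 := by
    rw [← analyticOrderAt_mul (hp a haU) (hg a haU), ← analyticOrderAt_congr (hfg a haU), hord,
      if_pos haS, add_zero]
  rw [← (hg a haU).analyticOrderAt_eq_zero]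
  exact ENat.add_right_injective_of_ne_top (hp_top a) hadd

lemma logDeriv_prod_sub_pow (S : Finset 𝕜) (m : 𝕜 → ℕ) {z : 𝕜} (hz : z ∉ S) :
    logDeriv (fun w ↦ ∏ a ∈ S, (w - a) ^ m a) z = ∑ a ∈ S, m a / (z - a) := by
  rw [logDeriv_prod]
  · refine Finset.sum_congr rfl fun a _ ↦ ?_
    rw [logDeriv_fun_pow (by fun_prop)]
    simp [logDeriv_apply, div_eq_mul_inv]
  · exact fun a ha ↦ pow_ne_zero _ (sub_ne_zero.2 fun h ↦ hz (h ▸ ha))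
  · exact fun a _ ↦ by fun_prop

end Factorization

section LogDerivBound

lemma exists_hasDerivAt_logDeriv_eq_mul_exp {g : ℂ → ℂ} {c : ℂ} {R : ℝ}
    (hg : DifferentiableOn ℂ g (ball c R)) (hne : ∀ z ∈ ball c R, g z ≠ 0) :
    ∃ h : ℂ → ℂ, h c = 0 ∧
      ∀ z ∈ ball c R, HasDerivAt h (logDeriv g z) z ∧ g z = g c * cexp (h z) := by
  have hlog : DifferentiableOn ℂ (logDeriv g) (ball c R) :=
    (hg.deriv isOpen_ball).div hg hne
  obtain ⟨h, hc, hh⟩ := hlog.isExactOn_ball.with_val_at c 0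
  refine ⟨h, hc, fun z hz ↦ ⟨hh z hz, ?_⟩⟩
  have hh_diff : DifferentiableOn ℂ h (ball c R) :=
    fun w hw ↦ (hh w hw).differentiableAt.differentiableWithinAt
  have hlogDeriv : EqOn (logDeriv g) (logDeriv fun w ↦ cexp (h w)) (ball c R) := fun w hw ↦ by
    simp [logDeriv_apply _ w, (hh w hw).cexp.deriv]
  obtain ⟨C, -, hC⟩ := (logDeriv_eqOn_iff hg hh_diff.cexp isOpen_ball
    (convex_ball c R).isPreconnected (fun _ _ ↦ Complex.exp_ne_zero _) hne).1 hlogDeriv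
  have hCc : C = g c := by
    simpa [hc] using (hC (mem_ball_self (pos_of_mem_ball hz))).symm
  simpa [hCc] using hC hz

lemma norm_deriv_sub_deriv_le {E : Type*} [NormedAddCommGroup E] [NormedSpace ℂ E]
    [CompleteSpace E] {f : ℂ → E} {c z : ℂ} {r C : ℝ}
    (hf : DifferentiableOn ℂ f (ball c (2 * r))) (hC : ∀ w ∈ ball c (2 * r), ‖f w‖ ≤ C)
    (hz : z ∈ ball c r) : ‖deriv f z - deriv f c‖ ≤ 2 * C / r ^ 2 * ‖z - c‖ := by
  have hr : 0 < r := pos_of_mem_ball hz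
  have hsub {w : ℂ} (hw : w ∈ ball c r) : closedBall w r ⊆ ball c (2 * r) :=
    closedBall_subset_ball' (by linarith [mem_ball.1 hw])
  have hderiv2 (w : ℂ) (hw : w ∈ ball c r) : ‖deriv (deriv f) w‖ ≤ 2 * C / r ^ 2 := by
    simpa [iteratedDeriv_succ] using
      Complex.norm_iteratedDeriv_le_of_forall_mem_sphere_norm_le 2 hr
        (hf.mono (closure_ball_subset_closedBall.trans (hsub hw))).diffContOnCl
        fun v hv ↦ hC v (hsub hw (sphere_subset_closedBall hv))
  refine (convex_ball c r).norm_image_sub_le_of_norm_deriv_le (fun w hw ↦ ?_) hderiv2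
    (mem_ball_self hr) hz
  exact (hf.deriv isOpen_ball).differentiableAt
    (isOpen_ball.mem_nhds (hsub hw (mem_closedBall_self hr.le)))

lemma norm_logDeriv_sub_logDeriv_zero_le {g : ℂ → ℂ} {R M : ℝ} {z : ℂ}
    (hg : DifferentiableOn ℂ g (ball 0 R)) (hne : ∀ w ∈ ball 0 R, g w ≠ 0) (hM : 0 < M)
    (hgM : ∀ w ∈ ball 0 R, ‖g w‖ ≤ ‖g 0‖ * rexp M) (hz : ‖z‖ < R / 4) :
    ‖logDeriv g z - logDeriv g 0‖ ≤ 64 * M * ‖z‖ / R ^ 2 := by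
  have hR : 0 < R := by linarith [norm_nonneg z]
  obtain ⟨h, h0, hh⟩ := exists_hasDerivAt_logDeriv_eq_mul_exp hg hne
  have hh_diff : DifferentiableOn ℂ h (ball 0 R) :=
    fun w hw ↦ (hh w hw).1.differentiableAt.differentiableWithinAt
  have hre : MapsTo h (ball 0 R) {w | w.re ≤ M} := fun w hw ↦ by
    have hexp := hgM w hw
    rw [(hh w hw).2, norm_mul, Complex.norm_exp] at hexp
    exact Real.exp_le_exp.1
      (le_of_mul_le_mul_left hexp (norm_pos_iff.2 (hne 0 (mem_ball_self hR))))
  have hh_le (w : ℂ) (hw : w ∈ ball 0 (2 * (R / 4))) : ‖h w‖ ≤ 2 * M := by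
    rw [mem_ball_zero_iff] at hw
    refine (Complex.borelCaratheodory_zero hM hh_diff hre hR
      (mem_ball_zero_iff.2 (by linarith)) h0).trans ?_
    rw [div_le_iff₀ (by linarith)]
    nlinarith
  have hderiv := norm_deriv_sub_deriv_le (hh_diff.mono (ball_subset_ball (by linarith))) hh_le
    (mem_ball_zero_iff.2 hz)
  rw [(hh z (mem_ball_zero_iff.2 (by linarith))).1.deriv,
    (hh 0 (mem_ball_self hR)).1.deriv, sub_zero] at hderiv
  refine hderiv.trans_eq ?_
  field_simp
  ring

end LogDerivBound

section EntireLogDeriv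

lemma norm_prod_sub_pow_zero_le {𝕜 : Type*} [NormedField 𝕜] {S : Finset 𝕜} (m : 𝕜 → ℕ) {z : 𝕜}
    (hS : ∀ a ∈ S, 2 * ‖a‖ ≤ ‖z‖) :
    ‖∏ a ∈ S, (0 - a) ^ m a‖ ≤ ‖∏ a ∈ S, (z - a) ^ m a‖ := by
  simp only [norm_prod, norm_pow]
  gcongr with a ha
  rw [zero_sub, norm_neg]
  linarith [hS a ha, norm_sub_norm_le z a]

lemma norm_le_norm_zero_mul_of_eq_prod_sub_pow_mul {F g : ℂ → ℂ} {S : Finset ℂ} {m : ℂ → ℕ}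
    {R C : ℝ} (hR : 0 < R) (hS : ∀ a ∈ S, ‖a‖ ≤ R) (hg : Differentiable ℂ g)
    (hFg : ∀ z, F z = (∏ a ∈ S, (z - a) ^ m a) * g z) (hF0 : F 0 ≠ 0)
    (hFC : ∀ w, ‖w‖ = 2 * R → ‖F w‖ ≤ ‖F 0‖ * C) {w : ℂ} (hw : ‖w‖ ≤ 2 * R) :
    ‖g w‖ ≤ ‖g 0‖ * C := by
  have hprod : 0 < ‖∏ a ∈ S, (0 - a) ^ m a‖ :=
    norm_pos_iff.2 (left_ne_zero_of_mul (hFg 0 ▸ hF0))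
  refine Complex.norm_le_of_forall_mem_frontier_norm_le isBounded_ball hg.diffContOnCl
    (U := ball 0 (2 * R)) (fun v hv ↦ ?_) ?_
  swap
  · rwa [closure_ball _ (by positivity), mem_closedBall_zero_iff]
  rw [frontier_ball _ (by positivity), mem_sphere_zero_iff_norm] at hv
  -- On `|v| = 2R` each factor `|v - a|` is at least `|a|`, so dividing `F` by the product costs
  -- nothing compared with dividing `F 0` by the product at `0`.
  refine le_of_mul_le_mul_left ?_ hprod
  calc
    _ ≤ ‖∏ a ∈ S, (v - a) ^ m a‖ * ‖g v‖ := by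
      gcongr
      exact norm_prod_sub_pow_zero_le m fun a ha ↦ by linarith [hS a ha]
    _ = ‖F v‖ := by rw [hFg, norm_mul]
    _ ≤ ‖F 0‖ * C := hFC v hv
    _ = _ := by rw [hFg 0, norm_mul, mul_assoc]

variable {F : ℂ → ℂ}

lemma analyticOrderAt_ne_top_of_apply_ne_zero (hF : Differentiable ℂ F) {c : ℂ} (hFc : F c ≠ 0)
    (a : ℂ) : analyticOrderAt F a ≠ ⊤ := fun ha ↦
  hFc (congrFun ((AnalyticOnNhd.analyticOrderAt_eq_top_iff_eq_zero a
    fun w ↦ hF.analyticAt w).1 ha) c)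

lemma exists_eq_prod_sub_pow_mul (hF : Differentiable ℂ F) {c : ℂ} (hFc : F c ≠ 0)
    (S : Finset ℂ) :
    ∃ g, Differentiable ℂ g ∧
      (∀ z, F z = (∏ a ∈ S, (z - a) ^ analyticOrderNatAt F a) * g z) ∧ ∀ a ∈ S, g a ≠ 0 := by
  obtain ⟨g, hg, hFg, hgS⟩ :=
    exists_eqOn_prod_sub_pow_mul (fun w _ ↦ hF.analyticAt w : AnalyticOnNhd ℂ F univ) S
      fun a _ ↦ analyticOrderAt_ne_top_of_apply_ne_zero hF hFc a
  exact ⟨g, fun z ↦ (hg z (mem_univ z)).differentiableAt, fun z ↦ hFg (mem_univ z),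
    fun a ha ↦ hgS a ha (mem_univ a)⟩

lemma norm_logDeriv_sub_logDeriv_zero_sub_sum_le {S : Finset ℂ} {R M : ℝ} {z : ℂ}
    (hF : Differentiable ℂ F) (hF0 : F 0 ≠ 0) (hFz : F z ≠ 0)
    (hS : ∀ a, a ∈ S ↔ ‖a‖ ≤ R ∧ F a = 0) (hM : 0 < M)
    (hFM : ∀ w, ‖w‖ = 2 * R → ‖F w‖ ≤ ‖F 0‖ * rexp M) (hz : ‖z‖ < R / 4) :
    ‖logDeriv F z - logDeriv F 0 - ∑ a ∈ S, analyticOrderNatAt F a * (1 / (z - a) + 1 / a)‖ ≤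
      64 * M * ‖z‖ / R ^ 2 := by
  have hR : 0 < R := by linarith [norm_nonneg z]
  obtain ⟨g, hg, hFg, hgS⟩ := exists_eq_prod_sub_pow_mul hF hF0 S
  have hg_ne (w : ℂ) (hw : w ∈ ball 0 R) : g w ≠ 0 := fun h0 ↦
    hgS w ((hS w).2 ⟨(mem_ball_zero_iff.1 hw).le, by rw [hFg, h0, mul_zero]⟩) h0
  have hg_le (w : ℂ) (hw : w ∈ ball 0 R) : ‖g w‖ ≤ ‖g 0‖ * rexp M :=
    norm_le_norm_zero_mul_of_eq_prod_sub_pow_mul hR (fun a ha ↦ ((hS a).1 ha).1) hg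
      hFg hF0 hFM (by linarith [mem_ball_zero_iff.1 hw])
  have hlogDeriv {w : ℂ} (hw : ‖w‖ < R) (hFw : F w ≠ 0) :
      logDeriv F w = ∑ a ∈ S, analyticOrderNatAt F a / (w - a) + logDeriv g w := by
    conv_lhs => rw [funext hFg]
    rw [logDeriv_mul w (left_ne_zero_of_mul (hFg w ▸ hFw))
      (hg_ne w (mem_ball_zero_iff.2 hw)) (by fun_prop) (hg w),
      logDeriv_prod_sub_pow _ _ fun hwS ↦ hFw ((hS w).1 hwS).2]
  convert norm_logDeriv_sub_logDeriv_zero_le hg.differentiableOn hg_ne hM hg_le hz using 2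
  rw [hlogDeriv (by linarith) hFz, hlogDeriv (by simpa) hF0]
  simp only [mul_add, mul_one_div, zero_sub, div_neg, Finset.sum_add_distrib,
    Finset.sum_neg_distrib]
  ring

lemma finite_inter_preimage_zero (hF : Differentiable ℂ F) {c : ℂ} (hFc : F c ≠ 0) {K : Set ℂ}
    (hK : IsCompact K) : (K ∩ F ⁻¹' {0}).Finite := by
  have hmem := AnalyticOnNhd.preimage_zero_mem_codiscrete (fun w _ ↦ hF.analyticAt w) hFc
  refine (hK.finite_sdiff_of_mem_codiscreteWithin
    (codiscreteWithin_mono (subset_univ K) hmem)).subset ?_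
  exact fun w hw ↦ ⟨hw.1, not_not.2 hw.2⟩

lemma tendsto_finsum_analyticOrderNatAt_mul {M : ℝ → ℝ} {z : ℂ} (hF : Differentiable ℂ F)
    (hF0 : F 0 ≠ 0) (hFz : F z ≠ 0) (hM : M =o[atTop] fun R ↦ R ^ 2)
    (hFM : ∀ w, ‖F w‖ ≤ rexp (M ‖w‖)) :
    Tendsto (fun R : ℝ ↦ ∑ᶠ a ∈ closedBall (0 : ℂ) R,
        (analyticOrderNatAt F a : ℂ) * (1 / (z - a) + 1 / a))
      atTop (𝓝 (logDeriv F z - logDeriv F 0)) := by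
  set N : ℝ → ℝ := fun R ↦ |M (2 * R)| + (|Real.log ‖F 0‖| + 1)
  have hN : N =o[atTop] fun R ↦ R ^ 2 := by
    have htwo : Tendsto (fun R : ℝ ↦ 2 * R) atTop atTop := tendsto_id.const_mul_atTop two_pos
    refine .add ?_ (isLittleO_const_left.2 (.inr ?_))
    · refine (hM.comp_tendsto htwo).abs_left.trans_isBigO ?_
      simpa [Function.comp_def, mul_pow] using
        (isBigO_refl (fun R : ℝ ↦ R ^ 2) atTop).const_mul_left (2 ^ 2)
    · exact tendsto_norm_atTop_atTop.comp (tendsto_pow_atTop two_ne_zero)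
  have hFN (R : ℝ) (w : ℂ) (hw : ‖w‖ = 2 * R) : ‖F w‖ ≤ ‖F 0‖ * rexp (N R) := by
    refine (hFM w).trans ?_
    rw [← Real.exp_log (norm_pos_iff.2 hF0), ← Real.exp_add, hw, Real.exp_le_exp]
    simp only [N]
    linarith [le_abs_self (M (2 * R)), neg_abs_le (Real.log ‖F 0‖)]
  rw [tendsto_iff_norm_sub_tendsto_zero]
  refine squeeze_zero' (g := fun R ↦ 64 * ‖z‖ * (N R / R ^ 2))
    (.of_forall fun _ ↦ norm_nonneg _) ?_ ?_
  · filter_upwards [eventually_gt_atTop (4 * ‖z‖)] with R hR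
    set S := (finite_inter_preimage_zero hF hF0 (isCompact_closedBall 0 R)).toFinset
    have hS : ∑ᶠ a ∈ closedBall (0 : ℂ) R, (analyticOrderNatAt F a : ℂ) * (1 / (z - a) + 1 / a) =
        ∑ a ∈ S, (analyticOrderNatAt F a : ℂ) * (1 / (z - a) + 1 / a) := by
      refine finsum_cond_eq_sum_of_cond_iff _ fun {a} ha ↦ ?_
      have hFa : F a = 0 :=
        apply_eq_zero_of_analyticOrderNatAt_ne_zero fun h ↦ ha (by simp [h])
      simp [S, hFa]
    rw [hS, norm_sub_rev]
    refine (norm_logDeriv_sub_logDeriv_zero_sub_sum_le hF hF0 hFz (by simp [S]) (by positivity)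
      (hFN R) (by linarith)).trans_eq (by ring)
  · simpa using hN.tendsto_div_nhds_zero.const_mul (64 * ‖z‖)

end EntireLogDeriv

section Summation

lemma hasSum_of_tendsto_finsum_mem_closedBall_of_nonneg {X : Type*} [PseudoMetricSpace X]
    {f : X → ℝ} {x₀ : X} {c : ℝ} (hf : ∀ x, 0 ≤ f x)
    (hfin : ∀ R, (closedBall x₀ R ∩ Function.support f).Finite)
    (hlim : Tendsto (fun R ↦ ∑ᶠ x ∈ closedBall x₀ R, f x) atTop (𝓝 c)) : HasSum f c := by
  have hsum (R : ℝ) : ∑ᶠ x ∈ closedBall x₀ R, f x = ∑ x ∈ (hfin R).toFinset, f x :=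
    finsum_mem_eq_sum f (hfin R)
  simp only [hsum] at hlim
  have hmono : Monotone fun R ↦ ∑ x ∈ (hfin R).toFinset, f x := fun R R' h ↦
    Finset.sum_le_sum_of_subset_of_nonneg (Finite.toFinset_mono
      (inter_subset_inter_left _ (closedBall_subset_closedBall h))) fun x _ _ ↦ hf x
  refine hasSum_of_isLUB_of_nonneg _ hf ⟨?_, fun b hb ↦ le_of_tendsto' hlim fun R ↦ hb ⟨_, rfl⟩⟩
  rintro _ ⟨S, rfl⟩
  obtain ⟨R, hR⟩ := S.finite_toSet.isBounded.subset_closedBall x₀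
  calc
    ∑ x ∈ S, f x = ∑ x ∈ S with f x ≠ 0, f x := (Finset.sum_filter_ne_zero S).symm
    _ ≤ ∑ x ∈ (hfin R).toFinset, f x := by
      refine Finset.sum_le_sum_of_subset_of_nonneg (fun x hx ↦ ?_) fun x _ _ ↦ hf x
      rw [Finset.mem_filter] at hx
      exact (hfin R).mem_toFinset.2 ⟨hR hx.1, hx.2⟩
    _ ≤ c := hmono.ge_of_tendsto hlim R

lemma hasSum_half_of_hasSum_add_comp_equiv {ι : Type*} {f : ι → ℝ} {s : ℝ} (hf : ∀ i, 0 ≤ f i)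
    (e : ι ≃ ι) (h : HasSum (fun i ↦ f i + f (e i)) s) : HasSum f (s / 2) := by
  have hsum : Summable f := .of_nonneg_of_le hf (fun i ↦ le_add_of_nonneg_right (hf _)) h.summable
  have hadd := hsum.hasSum.add (e.hasSum_iff.2 hsum.hasSum)
  have hs : s / 2 = ∑' i, f i := by
    linarith [h.unique hadd]
  exact hs ▸ hsum.hasSum

end Summation

section MellinGrowth

variable {E : Type*} [NormedAddCommGroup E] {f : ℝ → E} {σ b : ℝ}

lemma rpow_le_div_rpow_mul_exp {t y : ℝ} (hb : 0 < b) (ht : 0 ≤ t) (hy : 0 < y) :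
    t ^ y ≤ (y / b) ^ y * rexp (b * t) := by
  calc
    t ^ y = (y / b * (b * t / y)) ^ y := by congr 1; field_simp
    _ = (y / b) ^ y * (b * t / y) ^ y := Real.mul_rpow (by positivity) (by positivity)
    _ ≤ (y / b) ^ y * rexp (b * t / y) ^ y := by
      gcongr
      linarith [Real.add_one_le_exp (b * t / y)]
    _ = (y / b) ^ y * rexp (b * t) := by rw [← Real.exp_mul, div_mul_cancel₀ _ hy.ne']

lemma integrableOn_exp_mul_norm_of_isBigO_exp_neg {a p : ℝ} (hbp : b < p)
    (hf : LocallyIntegrableOn f (Ici a)) (hfp : f =O[atTop] fun t ↦ rexp (-p * t)) :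
    IntegrableOn (fun t ↦ rexp (b * t) * ‖f t‖) (Ioi a) := by
  have hcont : ContinuousOn (fun t ↦ rexp (b * t)) (Ici a) := by fun_prop
  have hexp : (fun t ↦ rexp (b * t) * ‖f t‖) =O[atTop] fun t ↦ rexp (-(p - b) * t) :=
    ((isBigO_refl (fun t ↦ rexp (b * t)) atTop).mul hfp.norm_left).congr_right fun t ↦ by
      rw [← Real.exp_add]
      ring_nf
  refine (LocallyIntegrableOn.integrableOn_of_isBigO_atTop ?_ hexp
    ⟨Ioi a, Ioi_mem_atTop a, exp_neg_integrableOn_Ioi a (sub_pos.2 hbp)⟩).mono_set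
    Ioi_subset_Ici_self
  exact hf.norm.continuousOn_mul hcont isLocallyClosed_Ici

variable [NormedSpace ℂ E]

lemma norm_cpow_smul_eq {t : ℝ} (ht : 0 < t) (s : ℂ) (v : E) :
    ‖(t : ℂ) ^ (s - 1) • v‖ = t ^ (s.re - 1) * ‖v‖ := by
  simp [norm_smul, Complex.norm_cpow_eq_rpow_re_of_pos ht]

lemma norm_mellin_le_add_rpow_mul (hb : 0 < b) (hσ : MellinConvergent f σ)
    (hexp : IntegrableOn (fun t ↦ rexp (b * t) * ‖f t‖) (Ioi 1)) {s : ℂ} {y : ℝ}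
    (hσs : σ ≤ s.re) (hsy : s.re - 1 ≤ y) (hy : 0 < y) :
    ‖mellin f s‖ ≤ (∫ t in Ioi (0 : ℝ), ‖(t : ℂ) ^ ((σ : ℂ) - 1) • f t‖) +
      (y / b) ^ y * ∫ t in Ioi 1, rexp (b * t) * ‖f t‖ := by
  have hmajor : IntegrableOn ((Ioi 1).indicator
      fun t ↦ (y / b) ^ y * (rexp (b * t) * ‖f t‖)) (Ioi 0) :=
    (integrableOn_indicator_iff measurableSet_Ioi).2
      (IntegrableOn.mono_set (hexp.const_mul _) inter_subset_left)
  have hsplit : ∫ t in Ioi (0 : ℝ), (‖(t : ℂ) ^ ((σ : ℂ) - 1) • f t‖ +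
        (Ioi 1).indicator (fun t ↦ (y / b) ^ y * (rexp (b * t) * ‖f t‖)) t) =
      (∫ t in Ioi (0 : ℝ), ‖(t : ℂ) ^ ((σ : ℂ) - 1) • f t‖) +
        (y / b) ^ y * ∫ t in Ioi 1, rexp (b * t) * ‖f t‖ := by
    rw [integral_add hσ.norm hmajor, setIntegral_indicator measurableSet_Ioi, Ioi_inter_Ioi,
      sup_eq_right.2 zero_le_one, integral_const_mul]
  rw [← hsplit, mellin]
  refine norm_integral_le_of_norm_le (hσ.norm.add hmajor) ?_
  filter_upwards [ae_restrict_mem measurableSet_Ioi] with t (ht : 0 < t)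
  rw [norm_cpow_smul_eq ht, norm_cpow_smul_eq ht, ofReal_re]
  obtain ht1 | ht1 := le_or_gt t 1
  · rw [indicator_of_notMem (notMem_Ioi.2 ht1), add_zero]
    exact mul_le_mul_of_nonneg_right
      (Real.rpow_le_rpow_of_exponent_ge ht ht1 (by linarith)) (norm_nonneg _)
  · rw [indicator_of_mem (mem_Ioi.2 ht1), ← mul_assoc]
    have hpow : t ^ (s.re - 1) ≤ (y / b) ^ y * rexp (b * t) :=
      (Real.rpow_le_rpow_of_exponent_le ht1.le hsy).trans (rpow_le_div_rpow_mul_exp hb ht.le hy)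
    exact le_add_of_nonneg_of_le (by positivity)
      (mul_le_mul_of_nonneg_right hpow (norm_nonneg _))

end MellinGrowth

section CompletedZetaGrowth

lemma exists_hurwitzEvenFEPair_f_modif_isBigO_exp_neg (a : UnitAddCircle) :
    ∃ p : ℝ, 0 < p ∧
      (HurwitzZeta.hurwitzEvenFEPair a).f_modif =O[atTop] fun t ↦ rexp (-p * t) := by
  obtain ⟨p, hp, hbound⟩ := HurwitzZeta.isBigO_atTop_evenKernel_sub a
  refine ⟨p, hp, (isBigO_ofReal_left.2 hbound).congr' ?_ .rfl⟩
  filter_upwards [eventually_gt_atTop 1] with t ht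
  simp [WeakFEPair.f_modif, HurwitzZeta.hurwitzEvenFEPair, ht, notMem_Ioo_of_ge ht.le,
    apply_ite ((↑) : ℝ → ℂ)]

lemma exists_norm_completedHurwitzZetaEven₀_le_of_re_nonneg (a : UnitAddCircle) :
    ∃ A B b : ℝ, 0 < b ∧ ∀ (s : ℂ) (y : ℝ), 0 ≤ s.re → s.re ≤ y → 0 < y →
      ‖HurwitzZeta.completedHurwitzZetaEven₀ a s‖ ≤ A + (y / b) ^ y * B := by
  set P := HurwitzZeta.hurwitzEvenFEPair a
  obtain ⟨p, hp, hbound⟩ := exists_hurwitzEvenFEPair_f_modif_isBigO_exp_neg a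
  have hconv : MellinConvergent P.f_modif (0 : ℝ) :=
    (P.isStrongFEPair_toStrongFEPair.hasMellin _).1
  have hint := integrableOn_exp_mul_norm_of_isBigO_exp_neg (half_lt_self hp)
    (P.hf_modif_int.mono_set (Ici_subset_Ioi.2 one_pos)) hbound
  set A := ∫ t in Ioi (0 : ℝ), ‖(t : ℂ) ^ (((0 : ℝ) : ℂ) - 1) • P.f_modif t‖
  set B := ∫ t in Ioi 1, rexp (p / 2 * t) * ‖P.f_modif t‖
  refine ⟨A, B, p / 2, half_pos hp, fun s y hs hsy hy ↦ ?_⟩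
  have hmellin : HurwitzZeta.completedHurwitzZetaEven₀ a s = mellin P.f_modif (s / 2) / 2 := rfl
  have hre : (s / 2).re = s.re / 2 := by simp
  rw [hmellin, norm_div, Complex.norm_ofNat]
  exact (half_le_self (norm_nonneg _)).trans (norm_mellin_le_add_rpow_mul (half_pos hp) hconv
    hint (by linarith) (by linarith) hy)

lemma exists_norm_completedRiemannZeta₀_le :
    ∃ A B b : ℝ, 0 < b ∧ ∀ s : ℂ,
      ‖completedRiemannZeta₀ s‖ ≤ A + ((‖s‖ + 1) / b) ^ (‖s‖ + 1) * B := by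
  obtain ⟨A, B, b, hb, hle⟩ := exists_norm_completedHurwitzZetaEven₀_le_of_re_nonneg 0
  simp only [HurwitzZeta.completedHurwitzZetaEven₀_zero] at hle
  refine ⟨A, B, b, hb, fun s ↦ ?_⟩
  have hs := abs_le.1 (Complex.abs_re_le_norm s)
  obtain h0 | h0 := le_total 0 s.re
  · exact hle s _ h0 (by linarith) (by positivity)
  · rw [← completedRiemannZeta₀_one_sub]
    refine hle (1 - s) _ ?_ ?_ (by positivity) <;> simp only [sub_re, one_re] <;> linarith

lemma div_rpow_le_exp {b y : ℝ} (hb : 0 < b) (hy : 0 < y) :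
    (y / b) ^ y ≤ rexp (|Real.log b| * y + y * Real.log y) := by
  rw [Real.rpow_def_of_pos (by positivity), Real.log_div hy.ne' hb.ne']
  refine Real.exp_le_exp.2 ?_
  nlinarith [neg_abs_le (Real.log b)]

lemma exists_norm_completedRiemannZeta₀_le_mul_exp :
    ∃ D k : ℝ, 0 ≤ D ∧ 0 ≤ k ∧ ∀ s : ℂ, ‖completedRiemannZeta₀ s‖ ≤
      D * rexp (k * (‖s‖ + 1) + (‖s‖ + 1) * Real.log (‖s‖ + 1)) := by
  obtain ⟨A, B, b, hb, hle⟩ := exists_norm_completedRiemannZeta₀_le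
  refine ⟨|A| + |B|, |Real.log b|, by positivity, by positivity, fun s ↦ ?_⟩
  set y := ‖s‖ + 1
  set e := rexp (|Real.log b| * y + y * Real.log y)
  have hy : 1 ≤ y := by simp [y]
  have he : 1 ≤ e := Real.one_le_exp
    (add_nonneg (by positivity) (mul_nonneg (by positivity) (Real.log_nonneg hy)))
  calc
    ‖completedRiemannZeta₀ s‖ ≤ A + (y / b) ^ y * B := hle s
    _ ≤ |A| + (y / b) ^ y * |B| := by
      gcongr
      exacts [le_abs_self A, le_abs_self B]
    _ ≤ |A| * e + e * |B| := by
      gcongr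
      · exact le_mul_of_one_le_right (abs_nonneg A) he
      · exact div_rpow_le_exp hb (by positivity)
    _ = (|A| + |B|) * e := by ring

end CompletedZetaGrowth

section RiemannXi

/-- Riemann's function `ξ(s) = s (s - 1) π^(-s/2) Γ(s/2) ζ(s) / 2`. Writing it with the entire
function `completedRiemannZeta₀ s = π^(-s/2) Γ(s/2) ζ(s) + 1 / s + 1 / (1 - s)` gives the correct
values at the removable singularities `0` and `1`. -/
noncomputable def riemannXi (s : ℂ) : ℂ :=
  (1 + s * (s - 1) * completedRiemannZeta₀ s) / 2

lemma differentiable_riemannXi : Differentiable ℂ riemannXi := by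
  have := differentiable_completedZeta₀
  unfold riemannXi
  fun_prop

lemma riemannXi_one_sub (s : ℂ) : riemannXi (1 - s) = riemannXi s := by
  simp only [riemannXi, completedRiemannZeta₀_one_sub]
  ring

lemma riemannXi_zero : riemannXi 0 = 1 / 2 := by
  simp [riemannXi]

lemma riemannXi_one : riemannXi 1 = 1 / 2 := by
  simp [riemannXi]

lemma riemannXi_eq_mul_riemannZeta {s : ℂ} (h0 : 0 < s.re) (h1 : s ≠ 1) :
    riemannXi s = s * (s - 1) * Gammaℝ s / 2 * riemannZeta s := by
  have hs : s ≠ 0 := by rintro rfl; simp at h0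
  have hG : Gammaℝ s ≠ 0 := Gammaℝ_ne_zero_of_re_pos h0
  have h1' : 1 - s ≠ 0 := sub_ne_zero.2 h1.symm
  rw [riemannZeta_def_of_ne_zero hs, completedRiemannZeta_eq, riemannXi]
  field_simp
  ring

lemma mul_sub_one_mul_Gammaℝ_div_two_ne_zero {s : ℂ} (h0 : 0 < s.re) (h1 : s ≠ 1) :
    s * (s - 1) * Gammaℝ s / 2 ≠ 0 := by
  have hs : s ≠ 0 := by rintro rfl; simp at h0
  exact div_ne_zero (mul_ne_zero (mul_ne_zero hs (sub_ne_zero.2 h1))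
    (Gammaℝ_ne_zero_of_re_pos h0)) two_ne_zero

lemma riemannXi_eq_zero_iff_riemannZeta_eq_zero {s : ℂ} (h0 : 0 < s.re) (h1 : s ≠ 1) :
    riemannXi s = 0 ↔ riemannZeta s = 0 := by
  rw [riemannXi_eq_mul_riemannZeta h0 h1,
    mul_eq_zero_iff_left (mul_sub_one_mul_Gammaℝ_div_two_ne_zero h0 h1)]

lemma riemannXi_ne_zero_of_one_le_re {s : ℂ} (hs : 1 ≤ s.re) : riemannXi s ≠ 0 := by
  obtain rfl | h1 := eq_or_ne s 1
  · simp [riemannXi_one]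
  · rw [Ne, riemannXi_eq_zero_iff_riemannZeta_eq_zero (by linarith) h1]
    exact riemannZeta_ne_zero_of_one_le_re hs

lemma riemannXi_eq_zero_iff {s : ℂ} : riemannXi s = 0 ↔ s ∈ nontrivialZetaZeros := by
  have hne {s : ℂ} (hs : s.re < 1) : s ≠ 1 := by rintro rfl; simp at hs
  refine ⟨fun hs ↦ ?_, fun ⟨hs, h0, h1⟩ ↦
    (riemannXi_eq_zero_iff_riemannZeta_eq_zero h0 (hne h1)).2 hs⟩
  have h1 : s.re < 1 := not_le.1 fun h ↦ riemannXi_ne_zero_of_one_le_re h hs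
  have h0 : 0 < s.re := not_le.1 fun h ↦
    riemannXi_ne_zero_of_one_le_re (s := 1 - s) (by simpa using h) (by rw [riemannXi_one_sub, hs])
  exact ⟨(riemannXi_eq_zero_iff_riemannZeta_eq_zero h0 (hne h1)).1 hs, h0, h1⟩

lemma analyticOrderAt_riemannXi {ρ : ℂ} (h0 : 0 < ρ.re) (h1 : ρ ≠ 1) :
    analyticOrderAt riemannXi ρ = analyticOrderAt riemannZeta ρ := by
  have hG : AnalyticAt ℂ Gammaℝ ρ := by
    simpa [Pi.inv_def] using
      (differentiable_Gammaℝ_inv.analyticAt ρ).inv (inv_ne_zero (Gammaℝ_ne_zero_of_re_pos h0))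
  have hfactor : AnalyticAt ℂ (fun s ↦ s * (s - 1) * Gammaℝ s / 2) ρ := by fun_prop (disch := simp)
  have heq : riemannXi =ᶠ[𝓝 ρ] (fun s ↦ s * (s - 1) * Gammaℝ s / 2) * riemannZeta := by
    filter_upwards [isOpen_ne.mem_nhds h1,
      (isOpen_lt continuous_const continuous_re).mem_nhds h0] with s hs1 hs0
    exact riemannXi_eq_mul_riemannZeta hs0 hs1
  rw [analyticOrderAt_congr heq,
    analyticOrderAt_mul hfactor (analyticOn_riemannZeta ρ (by simpa using h1)),
    hfactor.analyticOrderAt_eq_zero.2 (mul_sub_one_mul_Gammaℝ_div_two_ne_zero h0 h1), zero_add]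

lemma analyticOrderNatAt_riemannXi_one_sub (ρ : ℂ) :
    analyticOrderNatAt riemannXi (1 - ρ) = analyticOrderNatAt riemannXi ρ := by
  have hderiv : HasDerivAt (fun s : ℂ ↦ 1 - s) (-1) ρ := (hasDerivAt_id ρ).const_sub 1
  have hcomp := analyticOrderAt_comp_of_deriv_ne_zero (f := riemannXi)
    (g := fun s : ℂ ↦ 1 - s) (z₀ := ρ) (by fun_prop) (by simp [hderiv.deriv])
  have hsymm : riemannXi ∘ (fun s ↦ 1 - s) = riemannXi := funext riemannXi_one_sub
  rw [hsymm] at hcomp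
  simp [analyticOrderNatAt, hcomp]

lemma hasDerivAt_riemannXi_one : HasDerivAt riemannXi (completedRiemannZeta₀ 1 / 2) 1 := by
  have hpoly : HasDerivAt (fun s : ℂ ↦ s * (s - 1)) (1 * (1 - 1) + 1 * 1) 1 :=
    (hasDerivAt_id (1 : ℂ)).mul ((hasDerivAt_id (1 : ℂ)).sub_const 1)
  exact (((hpoly.mul (differentiable_completedZeta₀ 1).hasDerivAt).const_add 1).div_const
    2).congr_deriv (by simp)

lemma completedRiemannZeta₀_one_eq_ofReal : completedRiemannZeta₀ 1 =
    (1 + eulerMascheroniConstant / 2 - Real.log (2 * √π) : ℝ) := by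
  have hlog : Complex.log (4 * π) = (2 * Real.log (2 * √π) : ℝ) := by
    have hsq : 4 * π = (2 * √π) ^ 2 := by
      rw [mul_pow, Real.sq_sqrt pi_pos.le]
      norm_num
    have hcast : (4 * π : ℂ) = (4 * π : ℝ) := by push_cast; rfl
    rw [hcast, ← ofReal_log (by positivity), hsq, Real.log_pow]
    norm_num
  rw [completedRiemannZeta₀_one, hlog]
  push_cast
  ring

lemma logDeriv_riemannXi_one : logDeriv riemannXi 1 =
    (1 + eulerMascheroniConstant / 2 - Real.log (2 * √π) : ℝ) := by
  rw [logDeriv_apply, hasDerivAt_riemannXi_one.deriv, riemannXi_one,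
    completedRiemannZeta₀_one_eq_ofReal]
  ring

lemma logDeriv_riemannXi_one_sub (s : ℂ) :
    logDeriv riemannXi (1 - s) = -logDeriv riemannXi s := by
  have hcomp := logDeriv_comp (x := s) (differentiable_riemannXi (1 - s))
    (differentiableAt_id.const_sub 1 : DifferentiableAt ℂ (fun s ↦ 1 - s) s)
  have hsymm : riemannXi ∘ (fun s ↦ 1 - s) = riemannXi := funext riemannXi_one_sub
  rw [hsymm] at hcomp
  simp [hcomp]

lemma isLittleO_const_add_mul_add_mul_log_add_one (c k : ℝ) :
    (fun R ↦ c + (k * (R + 1) + (R + 1) * Real.log (R + 1))) =o[atTop] fun R : ℝ ↦ R ^ 2 := by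
  have hsq : Tendsto (fun R : ℝ ↦ R ^ 2) atTop atTop := tendsto_pow_atTop two_ne_zero
  have hone : (fun R : ℝ ↦ R + 1) =O[atTop] fun R ↦ R :=
    (isBigO_refl _ _).add (isLittleO_const_id_atTop 1).isBigO
  have hlog : (fun R : ℝ ↦ Real.log (R + 1)) =o[atTop] fun R ↦ R :=
    (Real.isLittleO_log_id_atTop.comp_tendsto (tendsto_atTop_add_const_right _ 1 tendsto_id)
      ).trans_isBigO hone
  have hid : (fun R : ℝ ↦ R) =o[atTop] fun R ↦ R ^ 2 := by
    simpa using isLittleO_pow_pow_atTop_of_lt (𝕜 := ℝ) one_lt_two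
  refine (isLittleO_const_left.2 (.inr (tendsto_norm_atTop_atTop.comp hsq))).add
    (((hone.const_mul_left k).trans_isLittleO hid).add ?_)
  simpa [sq] using hone.mul_isLittleO hlog

lemma norm_riemannXi_le (s : ℂ) :
    ‖riemannXi s‖ ≤ 1 + (‖s‖ + 1) ^ 2 * ‖completedRiemannZeta₀ s‖ := by
  calc
    ‖riemannXi s‖ ≤ ‖1 + s * (s - 1) * completedRiemannZeta₀ s‖ := by
      rw [riemannXi, norm_div, Complex.norm_ofNat]
      exact half_le_self (norm_nonneg _)
    _ ≤ 1 + ‖s‖ * ‖s - 1‖ * ‖completedRiemannZeta₀ s‖ := by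
      simpa using norm_add_le 1 (s * (s - 1) * completedRiemannZeta₀ s)
    _ ≤ 1 + (‖s‖ + 1) ^ 2 * ‖completedRiemannZeta₀ s‖ := by
      rw [sq]
      gcongr
      · linarith
      · simpa using norm_sub_le s 1

lemma exists_isLittleO_norm_riemannXi_le_exp : ∃ M : ℝ → ℝ, M =o[atTop] (fun R ↦ R ^ 2) ∧
    ∀ s, ‖riemannXi s‖ ≤ rexp (M ‖s‖) := by
  obtain ⟨D, k, hD, hk, hle⟩ := exists_norm_completedRiemannZeta₀_le_mul_exp
  refine ⟨_, isLittleO_const_add_mul_add_mul_log_add_one (Real.log (1 + D)) (2 + k), fun s ↦ ?_⟩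
  set y := ‖s‖ + 1
  set e := rexp (k * y + y * Real.log y)
  have hy : 1 ≤ y := by simp [y]
  have he : 1 ≤ e := Real.one_le_exp
    (add_nonneg (by positivity) (mul_nonneg (by positivity) (Real.log_nonneg hy)))
  calc
    ‖riemannXi s‖ ≤ 1 + y ^ 2 * (D * e) := (norm_riemannXi_le s).trans (by gcongr; exact hle s)
    _ ≤ y ^ 2 * e + y ^ 2 * (D * e) := by
      gcongr
      exact one_le_mul_of_one_le_of_one_le (one_le_pow₀ hy) he
    _ = (1 + D) * y ^ 2 * e := by ring
    _ ≤ (1 + D) * rexp y ^ 2 * e := by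
      gcongr
      linarith [Real.add_one_le_exp y]
    _ = rexp (Real.log (1 + D) + ((2 + k) * y + y * Real.log y)) := by
      rw [← Real.exp_nat_mul, mul_assoc, ← Real.exp_add, Real.exp_add (Real.log _),
        Real.exp_log (by positivity)]
      push_cast
      ring_nf

end RiemannXi

section ZetaZeros

lemma sInf_iteratedDeriv_ne_zero_eq_analyticOrderNatAt {𝕜 E : Type*} [NontriviallyNormedField 𝕜]
    [CharZero 𝕜] [NormedAddCommGroup E] [NormedSpace 𝕜 E] [CompleteSpace E] {f : 𝕜 → E} {a : 𝕜}
    (hf : AnalyticAt 𝕜 f a) :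
    sInf {m : ℕ | iteratedDeriv m f a ≠ 0} = analyticOrderNatAt f a := by
  cases hord : analyticOrderAt f a with
  | top =>
    have hzero (m : ℕ) : iteratedDeriv m f a = 0 :=
      (natCast_le_analyticOrderAt_iff_iteratedDeriv_eq_zero hf (n := m + 1)).1 (hord ▸ le_top) m
        m.lt_succ_self
    simp [analyticOrderNatAt, hord, hzero]
  | coe n =>
    obtain ⟨hlt, hn⟩ := (analyticOrderAt_eq_nat_iff_iteratedDeriv_eq_zero hf).1 hord
    have hnat : analyticOrderNatAt f a = n := by simp [analyticOrderNatAt, hord]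
    rw [hnat]
    exact IsLeast.csInf_eq ⟨hn, fun m hm ↦ not_lt.1 fun hmn ↦ hm (hlt m hmn)⟩

lemma zetaZeroOrder_eq_analyticOrderNatAt_riemannXi {ρ : ℂ} (hρ : ρ ∈ nontrivialZetaZeros) :
    zetaZeroOrder ρ = analyticOrderNatAt riemannXi ρ := by
  obtain ⟨-, h0, h1⟩ := hρ
  have hρ1 : ρ ≠ 1 := by rintro rfl; simp at h1
  rw [zetaZeroOrder, sInf_iteratedDeriv_ne_zero_eq_analyticOrderNatAt
    (analyticOn_riemannZeta ρ (by simpa using hρ1)), analyticOrderNatAt, analyticOrderNatAt,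
    analyticOrderAt_riemannXi h0 hρ1]

lemma analyticOrderNatAt_riemannXi_eq_zero {a : ℂ} (ha : a ∉ nontrivialZetaZeros) :
    analyticOrderNatAt riemannXi a = 0 :=
  not_not.1 fun h ↦ ha (riemannXi_eq_zero_iff.1 (apply_eq_zero_of_analyticOrderNatAt_ne_zero h))

lemma analyticOrderNatAt_riemannXi_mul_re_inv_nonneg (a : ℂ) :
    0 ≤ (analyticOrderNatAt riemannXi a : ℝ) * (1 / a).re := by
  by_cases ha : a ∈ nontrivialZetaZeros
  · rw [one_div, inv_re]
    exact mul_nonneg (Nat.cast_nonneg _) (div_nonneg ha.2.1.le (normSq_nonneg _))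
  · simp [analyticOrderNatAt_riemannXi_eq_zero ha]

lemma support_analyticOrderNatAt_riemannXi_mul_subset {S : Type*} [NonAssocSemiring S]
    (f : ℂ → S) :
    Function.support (fun a ↦ (analyticOrderNatAt riemannXi a : S) * f a) ⊆ nontrivialZetaZeros :=
  Function.support_subset_iff'.2 fun a ha ↦ by simp [analyticOrderNatAt_riemannXi_eq_zero ha]

lemma finite_closedBall_inter_nontrivialZetaZeros (c : ℂ) (R : ℝ) :
    (closedBall c R ∩ nontrivialZetaZeros).Finite := by
  have hzeros : nontrivialZetaZeros = riemannXi ⁻¹' {0} := by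
    ext a
    exact riemannXi_eq_zero_iff.symm
  rw [hzeros]
  exact finite_inter_preimage_zero differentiable_riemannXi (c := 0) (by simp [riemannXi_zero])
    (isCompact_closedBall c R)

lemma tendsto_finsum_analyticOrderNatAt_riemannXi_mul_re_inv_add :
    Tendsto (fun R : ℝ ↦ ∑ᶠ a ∈ closedBall (0 : ℂ) R,
        (analyticOrderNatAt riemannXi a : ℝ) * ((1 / a).re + (1 / (1 - a)).re)) atTop
      (𝓝 (2 * (1 + eulerMascheroniConstant / 2 - Real.log (2 * √π)))) := by
  obtain ⟨M, hM, hle⟩ := exists_isLittleO_norm_riemannXi_le_exp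
  have hlim := tendsto_finsum_analyticOrderNatAt_mul (z := 1) differentiable_riemannXi
    (by simp [riemannXi_zero]) (by simp [riemannXi_one]) hM hle
  have hlogDeriv : logDeriv riemannXi 1 - logDeriv riemannXi 0 =
      (2 * (1 + eulerMascheroniConstant / 2 - Real.log (2 * √π)) : ℝ) := by
    have hsymm := logDeriv_riemannXi_one_sub 1
    rw [sub_self, logDeriv_riemannXi_one] at hsymm
    rw [hsymm, logDeriv_riemannXi_one]
    push_cast
    ring
  rw [hlogDeriv] at hlim
  refine ((continuous_re.tendsto _).comp hlim).congr fun R ↦ ?_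
  refine (AddMonoidHom.map_finsum_mem' reAddGroupHom
    ((finite_closedBall_inter_nontrivialZetaZeros 0 R).subset (inter_subset_inter_right _
      (support_analyticOrderNatAt_riemannXi_mul_subset _)))).trans ?_
  exact finsum_mem_congr rfl fun a _ ↦ by simp [add_comm]

lemma hasSum_analyticOrderNatAt_riemannXi_mul_re_inv :
    HasSum (fun a : ℂ ↦ (analyticOrderNatAt riemannXi a : ℝ) * (1 / a).re)
      (1 + eulerMascheroniConstant / 2 - Real.log (2 * √π)) := by
  set f : ℂ → ℝ := fun a ↦ analyticOrderNatAt riemannXi a * (1 / a).re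
  have hf := analyticOrderNatAt_riemannXi_mul_re_inv_nonneg
  have hpair (a : ℂ) : f a + f (Equiv.subLeft 1 a) =
      analyticOrderNatAt riemannXi a * ((1 / a).re + (1 / (1 - a)).re) := by
    simp only [f, Equiv.subLeft_apply, analyticOrderNatAt_riemannXi_one_sub, mul_add]
  have hsum : HasSum (fun a ↦ f a + f (Equiv.subLeft 1 a))
      (2 * (1 + eulerMascheroniConstant / 2 - Real.log (2 * √π))) := by
    refine hasSum_of_tendsto_finsum_mem_closedBall_of_nonneg (x₀ := 0)
      (fun a ↦ add_nonneg (hf _) (hf _)) (fun R ↦ ?_) ?_ <;> simp only [hpair]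
    · exact (finite_closedBall_inter_nontrivialZetaZeros 0 R).subset
        (inter_subset_inter_right _ (support_analyticOrderNatAt_riemannXi_mul_subset _))
    · exact tendsto_finsum_analyticOrderNatAt_riemannXi_mul_re_inv_add
  have hhalf := hasSum_half_of_hasSum_add_comp_equiv hf (Equiv.subLeft 1) hsum
  rwa [mul_div_cancel_left₀ _ two_ne_zero] at hhalf

end ZetaZeros

/-- the sum over all nontrivial zeros `ρ` of `ζ`, counted with multiplicity,
of `Re(1/ρ)` converges absolutely and equals `1 + γ/2 − log(2√π)`. -/
theorem sum_re_inv_zeta_zeros :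
    Summable (fun ρ : nontrivialZetaZeros =>
      (zetaZeroOrder ρ : ℝ) * (1 / (ρ : ℂ)).re) ∧
    ∑' ρ : nontrivialZetaZeros, (zetaZeroOrder ρ : ℝ) * (1 / (ρ : ℂ)).re =
      1 + Real.eulerMascheroniConstant / 2 - Real.log (2 * Real.sqrt Real.pi) := by
  have hsum := (hasSum_subtype_iff_of_support_subset
    (support_analyticOrderNatAt_riemannXi_mul_subset _)).2
      hasSum_analyticOrderNatAt_riemannXi_mul_re_inv
  have horder (ρ : nontrivialZetaZeros) : zetaZeroOrder ρ = analyticOrderNatAt riemannXi ρ :=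
    zetaZeroOrder_eq_analyticOrderNatAt_riemannXi ρ.2
  simp only [horder]
  exact ⟨hsum.summable, hsum.tsum_eq⟩
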